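/- Let A = {0,1,2} and N = 10, and for K ≥ 0 let m(K) denote the minimum, over all subsets Y of A^{N+K} of cardinality 3^N, of the average (1/3^N) · Σ_{y ∈ Y} I(y) of empirical information content, where I(s) = −Σ_{j=1}^{L} log₂(n_{s_j}/L) for a string s of length L with symbol counts n_a. Then m(K) is strictly decreasing for K = 0,1,2,3,4: m(0) > m(1) > m(2) > m(3) > m(4). -/

import Mathlib

open Finset

/-- Empirical information content of a string `s` of length `L` over an alphabet `A`:
`I(s) = -∑_{j=1}^{L} log₂ (n_{s_j} / L)`, where `n_a` is the number of occurrences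
of the symbol `a` in `s`. -/
noncomputable def info {A : Type*} [DecidableEq A] {L : ℕ} (s : Fin L → A) : ℝ :=
  -∑ j : Fin L, Real.logb 2 (((univ.filter fun i => s i = s j).card : ℝ) / L)

/-- `m K` is the minimum, over all subsets `Y` of `A^{10+K}` (with `A = {0,1,2}`)
of cardinality `3^10`, of the average empirical information content
`(1/3^10) · ∑_{y ∈ Y} I(y)`. -/
noncomputable def m (K : ℕ) : ℝ :=
  ((univ : Finset (Fin (10 + K) → Fin 3)).powersetCard (3 ^ 10)).inf'
    (Finset.powersetCard_nonempty.mpr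
      (by
        simp only [Finset.card_univ, Fintype.card_fun, Fintype.card_fin]
        exact Nat.pow_le_pow_right (by norm_num) (by omega)))
    (fun Y => (∑ y ∈ Y, info y) / 3 ^ 10)

/-- Number of occurrences of `x` in `s`. -/
def cnt {L : ℕ} (s : Fin L → Fin 3) (x : Fin 3) : ℕ := (univ.filter fun i => s i = x).card

lemma cnt_cons {L : ℕ} (s : Fin L → Fin 3) (x y : Fin 3) :
    cnt (Fin.cons y s : Fin (L + 1) → Fin 3) x = (if y = x then 1 else 0) + cnt s x := by
  unfold cnt
  rw [Fin.card_filter_univ_succ]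
  simp only [Fin.cons_zero, Fin.cons_succ]
  split_ifs <;> omega

lemma cnt_sum {L : ℕ} (s : Fin L → Fin 3) : cnt s 0 + cnt s 1 + cnt s 2 = L := by
  have h := Finset.card_eq_sum_card_fiberwise (s := (univ : Finset (Fin L)))
    (t := (univ : Finset (Fin 3))) (f := s) (by intro x _; simp)
  rw [Fin.sum_univ_three] at h
  simp only [card_univ, Fintype.card_fin] at h
  exact h.symm

lemma count_type (L : ℕ) : ∀ a b : ℕ,
    (∑ s : Fin L → Fin 3, if cnt s 0 = a ∧ cnt s 1 = b then 1 else 0) =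
      Nat.choose L (a + b) * Nat.choose (a + b) a := by
  induction L with
  | zero =>
    intro a b
    rcases a with _ | a <;> rcases b with _ | b <;>
      simp [cnt, Nat.choose_eq_zero_of_lt]
  | succ L ih =>
    intro a b
    rw [← (Fin.consEquiv (fun _ : Fin (L + 1) => Fin 3)).sum_comp, Fintype.sum_prod_type,
      Fin.sum_univ_three]
    simp only [Fin.consEquiv, Equiv.coe_fn_mk, cnt_cons]
    rcases a with _ | a <;> rcases b with _ | b
    · simp
      simpa using ih 0 0
    · have h1 := ih 0 b
      have h2 := ih 0 (b + 1)
      simp [add_comm 1] at h1 h2 ⊢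
      rw [h1, h2, Nat.choose_succ_succ]
    · have h1 := ih a 0
      have h2 := ih (a + 1) 0
      simp [add_comm 1] at h1 h2 ⊢
      rw [h1, h2, Nat.choose_succ_succ]
    · have h1 := ih a (b + 1)
      have h2 := ih (a + 1) b
      have h3 := ih (a + 1) (b + 1)
      simp [add_comm 1] at h1 h2 h3 ⊢
      rw [h1, h2, h3]
      have e1 : a + 1 + (b + 1) = (a + b + 1) + 1 := by ring
      have e2 : a + (b + 1) = a + b + 1 := by ring
      have e3 : a + 1 + b = a + b + 1 := by ring
      rw [e1, e2, e3, Nat.choose_succ_succ L, Nat.choose_succ_succ (a + b + 1)]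
      ring

lemma sum_types (L : ℕ) (F : ℕ → ℕ → ℕ → ℕ) :
    ∑ s : Fin L → Fin 3, F (cnt s 0) (cnt s 1) (cnt s 2) =
      ∑ a ∈ range (L + 1), ∑ b ∈ range (L + 1),
        Nat.choose L (a + b) * Nat.choose (a + b) a * F a b (L - a - b) := by
  simp_rw [← count_type, Finset.sum_mul]
  simp_rw [Finset.sum_comm (s := range (L + 1)) (t := univ)]
  refine Finset.sum_congr rfl fun s _ => ?_
  have h := cnt_sum s
  rw [Finset.sum_eq_single (cnt s 0), Finset.sum_eq_single (cnt s 1)]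
  · have : L - cnt s 0 - cnt s 1 = cnt s 2 := by omega
    simp [this]
  · intro b _ hb
    simp [hb.symm]
  · intro hb
    simp at hb
    omega
  · intro a _ ha
    simp [ha.symm]
  · intro hb
    simp at hb
    omega

lemma info_eq {L : ℕ} (s : Fin L → Fin 3) :
    info s = L * Real.logb 2 L - (cnt s 0 * Real.logb 2 (cnt s 0) +
      cnt s 1 * Real.logb 2 (cnt s 1) + cnt s 2 * Real.logb 2 (cnt s 2)) := by
  have h1 : ∀ j : Fin L, Real.logb 2 (((univ.filter fun i => s i = s j).card : ℝ) / L) =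
      Real.logb 2 (cnt s (s j)) - Real.logb 2 L := by
    intro j
    have hj : (univ.filter fun i => s i = s j).card ≠ 0 := by
      apply Finset.card_ne_zero_of_mem (a := j)
      simp
    have hL : (L : ℝ) ≠ 0 := by
      have := j.2
      exact_mod_cast (by omega : L ≠ 0)
    rw [Real.logb_div (by exact_mod_cast hj) hL]
    rfl
  have h2 : ∑ j : Fin L, Real.logb 2 (cnt s (s j)) =
      ∑ x : Fin 3, (cnt s x : ℝ) * Real.logb 2 (cnt s x) := by
    rw [← Finset.sum_fiberwise univ s]
    refine Finset.sum_congr rfl fun x _ => ?_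
    rw [Finset.sum_congr rfl (g := fun _ => Real.logb 2 (cnt s x))]
    · rw [Finset.sum_const, nsmul_eq_mul]; rfl
    · intro j hj
      simp at hj
      rw [hj]
  unfold info
  rw [Finset.sum_congr rfl fun j _ => h1 j, Finset.sum_sub_distrib, h2, Fin.sum_univ_three]
  simp

/-- Integer parts of `100 * n * log₂ n`. -/
def lo (n : ℕ) : ℕ :=
  [0, 0, 200, 475, 800, 1160, 1550, 1965, 2400, 2852, 3321, 3805, 4301, 4810, 5330].getD n 0

set_option exponentiation.threshold 10000 in
lemma lo_nat : ∀ n < 15, 2 ^ lo n ≤ n ^ (100 * n) ∧ n ^ (100 * n) ≤ 2 ^ (lo n + 1) := by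
  intro n hn
  interval_cases n <;> simp only [lo, List.getD_cons_zero, List.getD_cons_succ] <;> norm_num

lemma lo_bound (n : ℕ) (hn : n < 15) :
    (lo n : ℝ) ≤ 100 * (n * Real.logb 2 n) ∧ 100 * (n * Real.logb 2 n) ≤ lo n + 1 := by
  rcases Nat.eq_zero_or_pos n with rfl | hpos
  · simp [lo]
  obtain ⟨h1, h2⟩ := lo_nat n hn
  have h1' : (2 : ℝ) ^ lo n ≤ (n : ℝ) ^ (100 * n) := by exact_mod_cast h1
  have h2' : (n : ℝ) ^ (100 * n) ≤ (2 : ℝ) ^ (lo n + 1) := by exact_mod_cast h2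
  have hn' : (0 : ℝ) < n := by exact_mod_cast hpos
  have e : Real.logb 2 ((n : ℝ) ^ (100 * n)) = 100 * (n * Real.logb 2 n) := by
    rw [Real.logb_pow]; push_cast; ring
  have k1 := Real.logb_le_logb_of_le (b := 2) (by norm_num) (by positivity) h1'
  have k2 := Real.logb_le_logb_of_le (b := 2) (by norm_num) (by positivity) h2'
  rw [e, Real.logb_pow, Real.logb_self_eq_one (by norm_num)] at k1 k2
  push_cast at k1 k2
  constructor <;> linarith

lemma info_bound {L : ℕ} (hL : L < 15) (s : Fin L → Fin 3) :
    (lo L : ℝ) - (lo (cnt s 0) + lo (cnt s 1) + lo (cnt s 2) + 3) ≤ 100 * info s ∧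
    100 * info s ≤ (lo L : ℝ) + 1 - (lo (cnt s 0) + lo (cnt s 1) + lo (cnt s 2)) := by
  have h := cnt_sum s
  have a := lo_bound (cnt s 0) (by omega)
  have b := lo_bound (cnt s 1) (by omega)
  have c := lo_bound (cnt s 2) (by omega)
  have d := lo_bound L hL
  rw [info_eq]
  constructor <;> linarith [a.1, a.2, b.1, b.2, c.1, c.2, d.1, d.2]

/-- Sum over types with multinomial weights. -/
def tsum3 (L : ℕ) (F : ℕ → ℕ → ℕ → ℕ) : ℕ :=
  ∑ a ∈ range (L + 1), ∑ b ∈ range (L + 1),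
    Nat.choose L (a + b) * Nat.choose (a + b) a * F a b (L - a - b)

lemma m_lower (K : ℕ) (hK : K < 5) (t c : ℕ)
    (hc : tsum3 (10 + K) (fun x y z => t + (lo x + lo y + lo z + 3) - lo (10 + K)) + c
      = t * 3 ^ 10) : (c : ℝ) / (100 * 3 ^ 10) ≤ m K := by
  unfold m
  rw [Finset.le_inf'_iff]
  intro Y hY
  have hcard := (Finset.mem_powersetCard.mp hY).2
  rw [div_le_div_iff₀ (by positivity) (by positivity)]
  set G : (Fin (10 + K) → Fin 3) → ℕ := fun s =>
    t + (lo (cnt s 0) + lo (cnt s 1) + lo (cnt s 2) + 3) - lo (10 + K) with hG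
  have hs : (∑ s, G s) + c = t * 3 ^ 10 := by
    rw [← hc, tsum3, ← sum_types (10 + K)
      (fun x y z => t + (lo x + lo y + lo z + 3) - lo (10 + K))]
  have h1 : ∀ s, (t : ℝ) - G s ≤ 100 * info s := by
    intro s
    have := (info_bound (by omega) s).1
    have h2 : t + (lo (cnt s 0) + lo (cnt s 1) + lo (cnt s 2) + 3) ≤ G s + lo (10 + K) := by
      simp only [hG]; omega
    have h3 : (t : ℝ) + (lo (cnt s 0) + lo (cnt s 1) + lo (cnt s 2) + 3) ≤ G s + lo (10 + K) := by
      exact_mod_cast h2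
    linarith
  have h2 : ∑ s ∈ Y, ((t : ℝ) - G s) ≤ ∑ s ∈ Y, 100 * info s :=
    Finset.sum_le_sum fun s _ => h1 s
  rw [Finset.sum_sub_distrib, Finset.sum_const, hcard, ← Finset.mul_sum, nsmul_eq_mul] at h2
  have h3 : ∑ s ∈ Y, G s ≤ ∑ s, G s := Finset.sum_le_sum_of_subset (Finset.subset_univ Y)
  have h4 : (∑ s ∈ Y, (G s : ℝ)) + c ≤ t * 3 ^ 10 := by
    exact_mod_cast (by omega : ∑ s ∈ Y, G s + c ≤ t * 3 ^ 10)
  push_cast at h2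
  nlinarith

lemma m_upper (K : ℕ) (hK : K < 5) (t c : ℕ)
    (hA : tsum3 (10 + K) (fun x y z => if lo (10 + K) + 1 < t + (lo x + lo y + lo z) then 1 else 0)
      ≤ 3 ^ 10)
    (hB : 3 ^ 10 ≤
      tsum3 (10 + K) (fun x y z => if lo (10 + K) + 1 ≤ t + (lo x + lo y + lo z) then 1 else 0))
    (hc : tsum3 (10 + K) (fun x y z => t + (lo x + lo y + lo z) - (lo (10 + K) + 1)) + c
      = t * 3 ^ 10) : m K ≤ (c : ℝ) / (100 * 3 ^ 10) := by
  set R : (Fin (10 + K) → Fin 3) → ℕ := fun s =>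
    t + (lo (cnt s 0) + lo (cnt s 1) + lo (cnt s 2)) with hR
  set G : (Fin (10 + K) → Fin 3) → ℕ := fun s => R s - (lo (10 + K) + 1) with hG
  rw [tsum3, ← sum_types (10 + K)
    (fun x y z => if lo (10 + K) + 1 < t + (lo x + lo y + lo z) then 1 else 0)] at hA
  rw [tsum3, ← sum_types (10 + K)
    (fun x y z => if lo (10 + K) + 1 ≤ t + (lo x + lo y + lo z) then 1 else 0)] at hB
  have hs : (∑ s, G s) + c = t * 3 ^ 10 := by
    rw [← hc, tsum3, ← sum_types (10 + K)
      (fun x y z => t + (lo x + lo y + lo z) - (lo (10 + K) + 1))]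
  rw [← Finset.card_filter] at hA hB
  obtain ⟨Y, hAY, hYB, hcard⟩ := Finset.exists_subsuperset_card_eq
    (Finset.monotone_filter_right univ (fun s _ (h : lo (10 + K) + 1 < R s) => h.le)) hA hB
  unfold m
  refine (Finset.inf'_le _ (Finset.mem_powersetCard.mpr ⟨Finset.subset_univ Y, hcard⟩)).trans ?_
  rw [div_le_div_iff₀ (by positivity) (by positivity)]
  have h1 : ∀ s ∈ Y, 100 * info s ≤ (t : ℝ) - G s := by
    intro s hsY
    have := (info_bound (by omega) s).2
    have hb : lo (10 + K) + 1 ≤ R s := (Finset.mem_filter.mp (hYB hsY)).2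
    have h2 : G s + (lo (10 + K) + 1) = t + (lo (cnt s 0) + lo (cnt s 1) + lo (cnt s 2)) := by
      change R s - (lo (10 + K) + 1) + (lo (10 + K) + 1) = R s
      omega
    have h3 : (G s : ℝ) + (lo (10 + K) + 1) =
        t + (lo (cnt s 0) + lo (cnt s 1) + lo (cnt s 2)) := by
      exact_mod_cast h2
    linarith
  have h2 : ∑ s ∈ Y, 100 * info s ≤ ∑ s ∈ Y, ((t : ℝ) - G s) := Finset.sum_le_sum h1
  rw [Finset.sum_sub_distrib, Finset.sum_const, hcard, ← Finset.mul_sum, nsmul_eq_mul] at h2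
  have h3 : ∑ s ∈ Y, G s = ∑ s, G s := by
    apply Finset.sum_subset (Finset.subset_univ Y)
    intro s _ hsY
    by_contra hne
    refine hsY (hAY (Finset.mem_filter.mpr ⟨Finset.mem_univ s, ?_⟩))
    simp only [hG] at hne
    change lo (10 + K) + 1 < R s
    omega
  have h4 : (∑ s ∈ Y, (G s : ℝ)) + c = t * 3 ^ 10 := by
    exact_mod_cast (by omega : ∑ s ∈ Y, G s + c = t * 3 ^ 10)
  push_cast at h2
  nlinarith

/-- With `A = {0,1,2}` and `N = 10`, the minimal average empirical information content
`m K` is strictly decreasing for `K = 0,1,2,3,4`. -/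
theorem stmt_1 : m 0 > m 1 ∧ m 1 > m 2 ∧ m 2 > m 3 ∧ m 3 > m 4 := by
  have l0 := m_lower 0 (by norm_num) 1699 84045579 (by decide +kernel)
  have l1 := m_lower 1 (by norm_num) 1577 83335587 (by decide +kernel)
  have l2 := m_lower 2 (by norm_num) 1533 82494777 (by decide +kernel)
  have l3 := m_lower 3 (by norm_num) 1555 80715951 (by decide +kernel)
  have u1 := m_upper 1 (by norm_num) 1581 83571783
    (by decide +kernel) (by decide +kernel) (by decide +kernel)
  have u2 := m_upper 2 (by norm_num) 1537 82730973
    (by decide +kernel) (by decide +kernel) (by decide +kernel)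
  have u3 := m_upper 3 (by norm_num) 1559 80952147
    (by decide +kernel) (by decide +kernel) (by decide +kernel)
  have u4 := m_upper 4 (by norm_num) 1535 78762375
    (by decide +kernel) (by decide +kernel) (by decide +kernel)
  norm_num at l0 l1 l2 l3 u1 u2 u3 u4
  refine ⟨?_, ?_, ?_, ?_⟩ <;> linarith
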